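/- arXiv:1405.0531 — 2 statements merged into one kernel-verified Lean document; each statement's English description precedes it below -/
import Mathlib

section
/- Let L denote the ideal of S = k[x,y,z,t,u,v,w] generated by f1, f2, f3, g1, g2, g3 (with a > 2b > 0). Then the following colon ideals are as stated: (i) L : H1 = (x^b, y^b, z^{a-b})S; (ii) (L, H1) : H2 = (x^b, y^{a-2b}, z^b)S; (iii) (L, H1, H2) : H3 = (x^{a-2b}, y^b, z^b)S. -/
set_option synthInstance.maxHeartbeats 1000000

open MvPolynomial

namespace Stmt18

abbrev SS (k : Type*) [Field k] := MvPolynomial (Fin 4) (MvPolynomial (Fin 3) k)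

variable {k : Type*} [Field k]

/-- The doubly-indexed monomials of `S`. -/
noncomputable def mm (d : Fin 4 →₀ ℕ) (e : Fin 3 →₀ ℕ) (r : k) : SS k :=
  monomial d (monomial e r)

lemma mm_mul (d d' : Fin 4 →₀ ℕ) (e e' : Fin 3 →₀ ℕ) (r r' : k) :
    mm d e r * mm d' e' r' = mm (d + d') (e + e') (r * r') := by
  simp [mm, monomial_mul]

lemma sum_mm (f : SS k) :
    f = ∑ d ∈ f.support, ∑ e ∈ (f.coeff d).support, mm d e ((f.coeff d).coeff e) := by
  conv_lhs => rw [f.as_sum]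
  refine Finset.sum_congr rfl fun d _ => ?_
  conv_lhs => rw [(f.coeff d).as_sum]
  rw [map_sum]
  rfl

/-- Additive functionals with prescribed values on monomials. -/
lemma exists_functional (φ : (Fin 4 →₀ ℕ) → (Fin 3 →₀ ℕ) → k) :
    ∃ Λ : SS k →+ k, ∀ d e r, Λ (mm d e r) = r * φ d e := by
  let μ : (Fin 4 →₀ ℕ) → (MvPolynomial (Fin 3) k →+ k) := fun d =>
    ((basisMonomials (Fin 3) k).constr k (φ d)).toAddMonoidHom
  refine ⟨(Finsupp.liftAddHom μ).comp
    (basisMonomials (Fin 4) (MvPolynomial (Fin 3) k)).repr.toLinearMap.toAddMonoidHom, ?_⟩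
  intro d e r
  have h1 : (basisMonomials (Fin 4) (MvPolynomial (Fin 3) k)).repr (mm d e r)
      = Finsupp.single d (monomial e r) := by
    have : mm d e r = (monomial e r : MvPolynomial (Fin 3) k) •
        basisMonomials (Fin 4) (MvPolynomial (Fin 3) k) d := by
      simp [mm, coe_basisMonomials, smul_monomial]
    rw [this, map_smul, Module.Basis.repr_self]
    simp
  have h2 : (monomial e r : MvPolynomial (Fin 3) k) = r • basisMonomials (Fin 3) k e := by
    simp [coe_basisMonomials, smul_monomial]
  simp only [AddMonoidHom.comp_apply]
  change (Finsupp.liftAddHom μ) ((basisMonomials (Fin 4) (MvPolynomial (Fin 3) k)).repr (mm d e r)) = _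
  rw [h1, Finsupp.liftAddHom_apply_single]
  change ((basisMonomials (Fin 3) k).constr k (φ d)) (monomial e r) = _
  rw [h2, map_smul, Module.Basis.constr_basis, smul_eq_mul]

/-- A functional vanishing on all monomial multiples of generators vanishes on the ideal. -/
lemma kill_span (Λ : SS k →+ k) (G : Set (SS k))
    (h : ∀ g ∈ G, ∀ d e r, Λ (mm d e r * g) = 0) :
    ∀ F ∈ Ideal.span G, Λ F = 0 := by
  intro F hF
  have key : ∀ g ∈ G, ∀ s : SS k, Λ (s * g) = 0 := by
    intro g hg s
    rw [sum_mm s, Finset.sum_mul, map_sum]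
    refine Finset.sum_eq_zero fun d _ => ?_
    rw [Finset.sum_mul, map_sum]
    exact Finset.sum_eq_zero fun e _ => h g hg _ _ _
  suffices hs : ∀ s : SS k, Λ (s * F) = 0 by simpa using hs 1
  induction hF using Submodule.span_induction with
  | mem x hx => exact key x hx
  | zero => simp
  | add x y _ _ hx hy => intro s; rw [mul_add, map_add, hx, hy, add_zero]
  | smul s' x _ hx => intro s; rw [smul_eq_mul, ← mul_assoc]; exact hx _

noncomputable def D (p q r s : ℕ) : Fin 4 →₀ ℕ :=
  Finsupp.single 0 p + Finsupp.single 1 q + Finsupp.single 2 r + Finsupp.single 3 s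
noncomputable def E (i j l : ℕ) : Fin 3 →₀ ℕ :=
  Finsupp.single 0 i + Finsupp.single 1 j + Finsupp.single 2 l

@[simp] lemma D0 (p q r s : ℕ) : D p q r s 0 = p := by simp [D]
@[simp] lemma D1 (p q r s : ℕ) : D p q r s 1 = q := by simp [D]
@[simp] lemma D2 (p q r s : ℕ) : D p q r s 2 = r := by simp [D]
@[simp] lemma D3 (p q r s : ℕ) : D p q r s 3 = s := by simp [D]
@[simp] lemma E0 (i j l : ℕ) : E i j l 0 = i := by simp [E]
@[simp] lemma E1 (i j l : ℕ) : E i j l 1 = j := by simp [E]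
@[simp] lemma E2 (i j l : ℕ) : E i j l 2 = l := by simp [E]

lemma mm_eq (p q r s i j l : ℕ) :
    (mm (D p q r s) (E i j l) 1 : SS k) =
      C (X 0 ^ i * X 1 ^ j * X 2 ^ l) * (X 0 ^ p * X 1 ^ q * X 2 ^ r * X 3 ^ s) := by
  simp [mm, D, E, X_pow_eq_monomial, monomial_mul, C_mul_monomial]

/-- The residue condition. -/
def cond (b c : ℕ) (P Q R N : ℤ) (d : Fin 4 →₀ ℕ) (e : Fin 3 →₀ ℕ) : Prop :=
  (d 0 : ℤ) ≤ P ∧ (d 1 : ℤ) ≤ Q ∧ (d 2 : ℤ) ≤ R ∧ (d 0 + d 1 + d 2 + d 3 : ℤ) = N ∧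
  (e 0 : ℤ) + 1 + b * ((Q - d 1) + (R - d 2)) = c * (P - d 0 + 1) ∧
  (e 1 : ℤ) + 1 + b * ((P - d 0) + (R - d 2)) = c * (Q - d 1 + 1) ∧
  (e 2 : ℤ) + 1 + b * ((P - d 0) + (Q - d 1)) = c * (R - d 2 + 1)

noncomputable def gens (k : Type*) [Field k] (b c : ℕ) : Set (SS k) :=
  {mm (D 0 1 0 0) (E (c+b) 0 0) 1 - mm (D 1 0 0 0) (E 0 (c+b) 0) 1,
   mm (D 0 0 1 0) (E (c+b) 0 0) 1 - mm (D 1 0 0 0) (E 0 0 (c+b)) 1,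
   mm (D 0 0 1 0) (E 0 (c+b) 0) 1 - mm (D 0 1 0 0) (E 0 0 (c+b)) 1,
   mm (D 0 0 0 1) (E c 0 0) 1 - mm (D 1 0 0 0) (E 0 b b) 1,
   mm (D 0 0 0 1) (E 0 c 0) 1 - mm (D 0 1 0 0) (E b 0 b) 1,
   mm (D 0 0 0 1) (E 0 0 c) 1 - mm (D 0 0 1 0) (E b b 0) 1}

lemma pos_of {b c n m e : ℤ} (hb : 0 ≤ b) (hc : 0 ≤ c) (he : 0 ≤ e) (hm : 0 ≤ m)
    (h : e + 1 + b * m = c * n) : 1 ≤ n := by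
  by_contra hn
  have : c * n ≤ 0 := mul_nonpos_of_nonneg_of_nonpos hc (by omega)
  have := mul_nonneg hb hm
  omega

lemma kill_gens (b c : ℕ) (P Q R N : ℤ) (Λ : SS k →+ k)
    (φ : (Fin 4 →₀ ℕ) → (Fin 3 →₀ ℕ) → k)
    (hφ : ∀ d e d' e', (cond b c P Q R N d e ↔ cond b c P Q R N d' e') → φ d e = φ d' e')
    (hΛ : ∀ d e r, Λ (mm d e r) = r * φ d e) :
    ∀ F ∈ Ideal.span (gens k b c), Λ F = 0 := by
  have hb : (0:ℤ) ≤ b := by positivity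
  have hc : (0:ℤ) ≤ c := by positivity
  have main : ∀ d e d' e' d0 e0 r, (cond b c P Q R N (d0+d) (e0+e) ↔ cond b c P Q R N (d0+d') (e0+e')) →
      Λ (mm d0 e0 r * (mm d e 1 - mm d' e' 1)) = 0 := by
    intro d e d' e' d0 e0 r h
    rw [mul_sub, mm_mul, mm_mul, map_sub, hΛ, hΛ, hφ _ _ _ _ h, sub_self]
  apply kill_span
  intro g hg d e r
  have p0 : (0:ℤ) ≤ e 0 := by positivity
  have p1 : (0:ℤ) ≤ e 1 := by positivity
  have p2 : (0:ℤ) ≤ e 2 := by positivity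
  simp only [gens, Set.mem_insert_iff, Set.mem_singleton_iff] at hg
  rcases hg with rfl | rfl | rfl | rfl | rfl | rfl <;> apply main <;>
    simp only [cond, Finsupp.add_apply, D0, D1, D2, D3, E0, E1, E2, Nat.cast_add,
      Nat.cast_one, add_zero] <;>
    constructor <;> rintro ⟨h0, h1, h2, h3, h4, h5, h6⟩ <;>
    first
    | (have n0 : 1 ≤ P - d 0 := pos_of (e := e 0) (m := (Q - d 1) + (R - d 2)) hb hc p0 (by omega) (by linarith)
       have n1 : 1 ≤ Q - d 1 := pos_of (e := e 1) (m := (P - d 0) + (R - d 2)) hb hc p1 (by omega) (by linarith)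
       refine ⟨by omega, by omega, by omega, by omega, ?_, ?_, ?_⟩ <;> linarith)
    | (have n0 : 1 ≤ P - d 0 := pos_of (e := e 0) (m := (Q - d 1) + (R - d 2)) hb hc p0 (by omega) (by linarith)
       have n1 : 1 ≤ R - d 2 := pos_of (e := e 2) (m := (P - d 0) + (Q - d 1)) hb hc p2 (by omega) (by linarith)
       refine ⟨by omega, by omega, by omega, by omega, ?_, ?_, ?_⟩ <;> linarith)
    | (have n0 : 1 ≤ Q - d 1 := pos_of (e := e 1) (m := (P - d 0) + (R - d 2)) hb hc p1 (by omega) (by linarith)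
       have n1 : 1 ≤ R - d 2 := pos_of (e := e 2) (m := (P - d 0) + (Q - d 1)) hb hc p2 (by omega) (by linarith)
       refine ⟨by omega, by omega, by omega, by omega, ?_, ?_, ?_⟩ <;> linarith)
    | (have n0 : 1 ≤ P - d 0 := pos_of (e := e 0) (m := (Q - d 1) + (R - d 2)) hb hc p0 (by omega) (by linarith)
       refine ⟨by omega, by omega, by omega, by omega, ?_, ?_, ?_⟩ <;> linarith)
    | (have n1 : 1 ≤ Q - d 1 := pos_of (e := e 1) (m := (P - d 0) + (R - d 2)) hb hc p1 (by omega) (by linarith)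
       refine ⟨by omega, by omega, by omega, by omega, ?_, ?_, ?_⟩ <;> linarith)
    | (have n1 : 1 ≤ R - d 2 := pos_of (e := e 2) (m := (P - d 0) + (Q - d 1)) hb hc p2 (by omega) (by linarith)
       refine ⟨by omega, by omega, by omega, by omega, ?_, ?_, ?_⟩ <;> linarith)

lemma mm_factor (d : Fin 4 →₀ ℕ) (e e' : Fin 3 →₀ ℕ) (r : k)
    (h : e' ≤ e) : mm d e r = mm d (e - e') r * mm 0 e' 1 := by
  rw [mm_mul, mul_one, add_zero, tsub_add_cancel_of_le h]

/-- Main lemma. -/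
lemma main (b c : ℕ) (K : Ideal (SS k)) (e0 e1 e2 m0 m1 m2 α β γ : ℕ)
    (τ : Fin 4 →₀ ℕ) (ε : Fin 3 →₀ ℕ) (hτ : 1 ≤ τ 0 + τ 1 + τ 2)
    (H : SS k) (hH : H = mm (D 0 0 0 2) (E e0 e1 e2) 1 - mm τ ε 1)
    (h0 : e0 + m0 + α = c) (h1 : e1 + m1 + β = c) (h2 : e2 + m2 + γ = c)
    (hα : mm 0 (E α 0 0) 1 * H ∈ K) (hβ : mm 0 (E 0 β 0) 1 * H ∈ K)
    (hγ : mm 0 (E 0 0 γ) 1 * H ∈ K)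
    (hK : ∀ F ∈ K, mm 0 (E m0 m1 m2) 1 * F ∈ Ideal.span (gens k b c))
    (f : SS k) (hf : f * H ∈ K) :
    f ∈ Ideal.span {mm 0 (E α 0 0) 1, mm 0 (E 0 β 0) 1, mm 0 (E 0 0 γ) (1 : k)} := by
  classical
  set I : Ideal (SS k) := Ideal.span {mm 0 (E α 0 0) 1, mm 0 (E 0 β 0) 1, mm 0 (E 0 0 γ) (1 : k)} with hI
  have hIK : ∀ F ∈ I, F * H ∈ K := by
    intro F hF
    have : I ≤ K.colon {H} := by
      rw [hI, Ideal.span_le]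
      rintro x (rfl | rfl | rfl) <;> simp only [SetLike.mem_coe, Submodule.mem_colon_singleton, smul_eq_mul] <;> assumption
    simpa only [Submodule.mem_colon_singleton, smul_eq_mul] using this hF
  -- monomials that are not reduced lie in `I`
  have hmon : ∀ d e r, ¬ (e 0 < α ∧ e 1 < β ∧ e 2 < γ) → mm d e r ∈ I := by
    intro d e r h
    have : E α 0 0 ≤ e ∨ E 0 β 0 ≤ e ∨ E 0 0 γ ≤ e := by
      by_contra hcon
      apply h
      simp only [not_or, Finsupp.le_def, Fin.forall_fin_succ] at hcon
      simpa using hcon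
    rcases this with h | h | h
    all_goals
      rw [mm_factor d e _ r h]
      exact Ideal.mul_mem_left _ _ (Ideal.subset_span (by simp))
  by_contra hfI
  -- a reduced monomial in the support of `f`
  have hex : ∃ n, ∃ d e, (f.coeff d).coeff e ≠ 0 ∧ (e 0 < α ∧ e 1 < β ∧ e 2 < γ) ∧
      d 0 + d 1 + d 2 = n := by
    by_contra hcon
    push Not at hcon
    apply hfI
    rw [sum_mm f]
    refine Ideal.sum_mem _ fun d _ => Ideal.sum_mem _ fun e he => hmon _ _ _ fun h => ?_
    exact hcon _ d e (by simpa using he) h rfl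
  obtain ⟨d₀, e₀, hne, ⟨r0, r1, r2⟩, hn⟩ := Nat.find_spec hex
  have hmin : ∀ d e, (f.coeff d).coeff e ≠ 0 → (e 0 < α ∧ e 1 < β ∧ e 2 < γ) →
      d₀ 0 + d₀ 1 + d₀ 2 ≤ d 0 + d 1 + d 2 := by
    intro d e h h'
    rw [hn]
    exact Nat.find_min' hex ⟨d, e, h, h', rfl⟩
  let P : ℤ := d₀ 0
  let Q : ℤ := d₀ 1
  let R : ℤ := d₀ 2
  let N : ℤ := d₀ 0 + d₀ 1 + d₀ 2 + d₀ 3 + 2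
  obtain ⟨Λ, hΛ⟩ := exists_functional (k := k) (fun d e => if cond b c P Q R N d e then 1 else 0)
  have hkill := kill_gens b c P Q R N Λ _ (by intro d e d' e' h; simp only [h]) hΛ
  let M : Fin 3 →₀ ℕ := E (α - 1 - e₀ 0) (β - 1 - e₀ 1) (γ - 1 - e₀ 2)
  have hkillK : ∀ F ∈ K, Λ (mm 0 M 1 * (mm 0 (E m0 m1 m2) 1 * F)) = 0 := fun F hF =>
    hkill _ (Ideal.mul_mem_left _ _ (hK F hF))
  have hcalc : ∀ d e r, Λ (mm 0 M 1 * (mm 0 (E m0 m1 m2) 1 * (mm d e r * H))) =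
      (if cond b c P Q R N (d + D 0 0 0 2) (M + (E m0 m1 m2 + (e + E e0 e1 e2))) then r else 0) -
      (if cond b c P Q R N (d + τ) (M + (E m0 m1 m2 + (e + ε))) then r else 0) := by
    intro d e r
    rw [hH]
    simp only [mul_sub, mm_mul, map_sub, hΛ, zero_add, mul_one, one_mul, mul_ite, mul_zero]
  have hzero := hkillK _ hf
  have hterm : ∀ d e, (f.coeff d).coeff e ≠ 0 → ¬ (d = d₀ ∧ e = e₀) →
      Λ (mm 0 M 1 * (mm 0 (E m0 m1 m2) 1 * (mm d e ((f.coeff d).coeff e) * H))) = 0 := by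
    intro d e hde hneq
    by_cases hred : e 0 < α ∧ e 1 < β ∧ e 2 < γ
    · have hm := hmin d e hde hred
      rw [hcalc, if_neg, if_neg, sub_zero]
      · rintro ⟨c0, c1, c2, -⟩
        simp only [Finsupp.add_apply, P, Q, R] at c0 c1 c2
        omega
      · rintro ⟨c0, c1, c2, c3, c4, c5, c6⟩
        simp only [Finsupp.add_apply, P, Q, R, N, M, D0, D1, D2, D3, E0, E1, E2] at c0 c1 c2 c3 c4 c5 c6
        have q0 : d 0 = d₀ 0 := by omega
        have q1 : d 1 = d₀ 1 := by omega
        have q2 : d 2 = d₀ 2 := by omega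
        have q3 : d 3 = d₀ 3 := by push_cast at c3; omega
        simp only [q0, q1, q2, add_zero, sub_self, mul_zero, zero_add, mul_one] at c4 c5 c6
        apply hneq
        constructor
        · ext i; fin_cases i <;> assumption
        · ext i; fin_cases i
          · change e 0 = e₀ 0; omega
          · change e 1 = e₀ 1; omega
          · change e 2 = e₀ 2; omega
    · exact hkillK _ (hIK _ (hmon _ _ _ hred))
  have hval : Λ (mm 0 M 1 * (mm 0 (E m0 m1 m2) 1 * (mm d₀ e₀ ((f.coeff d₀).coeff e₀) * H))) =
      (f.coeff d₀).coeff e₀ := by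
    rw [hcalc, if_pos, if_neg, sub_zero]
    · rintro ⟨c0, c1, c2, -⟩
      simp only [Finsupp.add_apply, P, Q, R] at c0 c1 c2
      omega
    · refine ⟨?_, ?_, ?_, ?_, ?_, ?_, ?_⟩ <;>
        simp only [Finsupp.add_apply, P, Q, R, N, M, D0, D1, D2, D3, E0, E1, E2, add_zero, sub_self, mul_zero, zero_add, mul_one] <;> push_cast <;> omega
  apply hne
  rw [← hval, ← hzero]
  conv_rhs => rw [sum_mm f]
  simp only [Finset.sum_mul, Finset.mul_sum, map_sum]
  rw [Finset.sum_eq_single d₀, Finset.sum_eq_single e₀]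
  · intro e he hee
    exact hterm _ _ (by simpa using he) (fun h => hee h.2)
  · intro h; exact absurd (by simpa using hne) h
  · intro d _ hd
    refine Finset.sum_eq_zero fun e he => hterm _ _ (by simpa using he) (fun h => hd h.1)
  · intro h
    have : f.coeff d₀ = 0 := by simpa using h
    simp [this] at hne

/-- Membership of the easy multiples of a form `H` of the first kind. -/
lemma easy {A : Type*} [CommRing A] (K : Ideal A) (b n : ℕ) (x y z t u v w : A)
    (hf : y ^ (2 * b + n) * v - z ^ (2 * b + n) * u ∈ K)
    (h1 : x ^ (b + n) * w - (y * z) ^ b * t ∈ K)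
    (h2 : y ^ (b + n) * w - (x * z) ^ b * u ∈ K)
    (h3 : z ^ (b + n) * w - (x * y) ^ b * v ∈ K) :
    x ^ b * ((x * y) ^ n * w ^ 2 - z ^ (2 * b) * t * u) ∈ K ∧
    y ^ b * ((x * y) ^ n * w ^ 2 - z ^ (2 * b) * t * u) ∈ K ∧
    z ^ (b + n) * ((x * y) ^ n * w ^ 2 - z ^ (2 * b) * t * u) ∈ K := by
  refine ⟨?_, ?_, ?_⟩
  · have := K.add_mem (K.mul_mem_left (y ^ n * w) h1) (K.mul_mem_left (z ^ b * t) h2)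
    convert this using 1
    ring
  · have := K.add_mem (K.mul_mem_left (x ^ n * w) h2) (K.mul_mem_left (z ^ b * u) h1)
    convert this using 1
    ring
  · have := K.add_mem (K.add_mem (K.mul_mem_left ((x * y) ^ n * w) h3)
      (K.mul_mem_left (y ^ (b + n) * v) h1)) (K.mul_mem_left (z ^ b * t) hf)
    convert this using 1
    ring

lemma colon_eq {A : Type*} [CommRing A] (K : Ideal A) (H p q r : A)
    (hp : p * H ∈ K) (hq : q * H ∈ K) (hr : r * H ∈ K)
    (h : ∀ f, f * H ∈ K → f ∈ Ideal.span {p, q, r}) :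
    K.colon (Ideal.span {H} : Ideal A) = Ideal.span {p, q, r} := by
  have hc : ∀ f, f ∈ K.colon (Ideal.span {H} : Ideal A) ↔ f * H ∈ K := by
    intro f
    rw [Submodule.mem_colon]
    constructor
    · intro hf
      exact hf H (Ideal.subset_span rfl)
    · intro hf s hs
      obtain ⟨s', rfl⟩ := Ideal.mem_span_singleton'.1 hs
      have := K.mul_mem_left s' hf
      rw [smul_eq_mul]
      convert this using 1
      ring
  apply le_antisymm
  · intro f hf
    exact h f ((hc f).1 hf)
  · rw [Ideal.span_le]
    rintro s (rfl | rfl | rfl)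
    · exact (hc _).2 hp
    · exact (hc _).2 hq
    · exact (hc _).2 hr

lemma mul_span {A : Type*} [CommRing A] (K : Ideal A) (G : Set A) (m : A)
    (h : ∀ g ∈ G, m * g ∈ K) : ∀ F ∈ Ideal.span G, m * F ∈ K := by
  intro F hF
  have : Ideal.span G ≤ K.colon {m} := by
    rw [Ideal.span_le]
    intro g hg
    rw [SetLike.mem_coe, Submodule.mem_colon_singleton, smul_eq_mul, mul_comm]
    exact h g hg
  have := this hF
  rwa [Submodule.mem_colon_singleton, smul_eq_mul, mul_comm] at this

section incl

variable {A : Type*} [CommRing A] (m a1 a2 a3 a4 a5 a6 h h' : A)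

lemma sub7 : Ideal.span {a1, a2, a3, a4, a5, a6} ≤ Ideal.span {a1, a2, a3, a4, a5, a6, h} := by
  apply Ideal.span_mono
  intro s hs
  simp only [Set.mem_insert_iff, Set.mem_singleton_iff] at hs ⊢
  tauto

lemma sub8 : Ideal.span {a1, a2, a3, a4, a5, a6} ≤
    Ideal.span {a1, a2, a3, a4, a5, a6, h, h'} := by
  apply Ideal.span_mono
  intro s hs
  simp only [Set.mem_insert_iff, Set.mem_singleton_iff] at hs ⊢
  tauto

lemma mem7 : h ∈ Ideal.span {a1, a2, a3, a4, a5, a6, h} := Ideal.subset_span (by simp)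

lemma mem8 : h ∈ Ideal.span {a1, a2, a3, a4, a5, a6, h, h'} := Ideal.subset_span (by simp)

lemma mul7 (hm : m * h ∈ Ideal.span {a1, a2, a3, a4, a5, a6}) :
    ∀ F ∈ Ideal.span {a1, a2, a3, a4, a5, a6, h},
      m * F ∈ Ideal.span {a1, a2, a3, a4, a5, a6} := by
  apply mul_span
  intro g hg
  by_cases hgh : g = h
  · rw [hgh]; exact hm
  · refine Ideal.mul_mem_left _ _ (Ideal.subset_span ?_)
    simp only [Set.mem_insert_iff, Set.mem_singleton_iff] at hg ⊢
    tauto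

lemma mul8 (hm : m * h ∈ Ideal.span {a1, a2, a3, a4, a5, a6})
    (hm' : m * h' ∈ Ideal.span {a1, a2, a3, a4, a5, a6}) :
    ∀ F ∈ Ideal.span {a1, a2, a3, a4, a5, a6, h, h'},
      m * F ∈ Ideal.span {a1, a2, a3, a4, a5, a6} := by
  apply mul_span
  intro g hg
  by_cases hgh : g = h
  · rw [hgh]; exact hm
  by_cases hgh' : g = h'
  · rw [hgh']; exact hm'
  · refine Ideal.mul_mem_left _ _ (Ideal.subset_span ?_)
    simp only [Set.mem_insert_iff, Set.mem_singleton_iff] at hg ⊢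
    tauto

end incl

end Stmt18

set_option maxHeartbeats 1000000 in
/-- In `S = k[x,y,z,t,u,v,w]` with `a > 2b > 0`, let `L` be the
ideal generated by the syzygy forms `f1, f2, f3, g1, g2, g3`.  Then:
(i) `L : H1 = (x^b, y^b, z^{a-b})`;
(ii) `(L, H1) : H2 = (x^b, y^{a-2b}, z^b)`;
(iii) `(L, H1, H2) : H3 = (x^{a-2b}, y^b, z^b)`. -/
theorem stmt18 {k : Type*} [Field k] (a b : ℕ) (hb : 0 < b) (h2b : 2 * b < a) :
    let R := MvPolynomial (Fin 3) k
    let x : R := X 0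
    let y : R := X 1
    let z : R := X 2
    let S := MvPolynomial (Fin 4) R
    let t : S := X 0
    let u : S := X 1
    let v : S := X 2
    let w : S := X 3
    let f1 : S := C (x ^ a) * u - C (y ^ a) * t
    let f2 : S := C (x ^ a) * v - C (z ^ a) * t
    let f3 : S := C (y ^ a) * v - C (z ^ a) * u
    let g1 : S := C (x ^ (a - b)) * w - C ((y * z) ^ b) * t
    let g2 : S := C (y ^ (a - b)) * w - C ((x * z) ^ b) * u
    let g3 : S := C (z ^ (a - b)) * w - C ((x * y) ^ b) * v
    let H1 : S := C ((x * y) ^ (a - 2 * b)) * w ^ 2 - C (z ^ (2 * b)) * t * u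
    let H2 : S := C ((x * z) ^ (a - 2 * b)) * w ^ 2 - C (y ^ (2 * b)) * t * v
    let H3 : S := C ((y * z) ^ (a - 2 * b)) * w ^ 2 - C (x ^ (2 * b)) * u * v
    let L : Ideal S := Ideal.span {f1, f2, f3, g1, g2, g3}
    (L.colon (Ideal.span {H1}) =
      Ideal.span {C (x ^ b), C (y ^ b), C (z ^ (a - b))}) ∧
    ((Ideal.span {f1, f2, f3, g1, g2, g3, H1}).colon (Ideal.span {H2}) =
      Ideal.span {C (x ^ b), C (y ^ (a - 2 * b)), C (z ^ b)}) ∧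
    ((Ideal.span {f1, f2, f3, g1, g2, g3, H1, H2}).colon (Ideal.span {H3}) =
      Ideal.span {C (x ^ (a - 2 * b)), C (y ^ b), C (z ^ b)}) := by
  obtain ⟨n, rfl⟩ : ∃ n, a = 2 * b + n := ⟨a - 2 * b, by omega⟩
  have ea : 2 * b + n - b = b + n := by omega
  have eb : 2 * b + n - 2 * b = n := by omega
  have ec : b + n + b = 2 * b + n := by omega
  intro R x y z S t u v w f1 f2 f3 g1 g2 g3 H1 H2 H3 L
  rw [ea, eb]
  have hL : Ideal.span (Stmt18.gens k b (b + n)) = L := by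
    congr 1
    simp only [Stmt18.gens, Stmt18.mm_eq, f1, f2, f3, g1, g2, g3, x, y, z, t, u, v, w, ea, ec,
      mul_pow, pow_zero, pow_one, one_mul, mul_one]
  have eH1 : H1 = (C x * C y) ^ n * w ^ 2 - C z ^ (2 * b) * t * u := by
    simp only [H1, eb, map_pow, map_mul]
  have eH2 : H2 = (C x * C z) ^ n * w ^ 2 - C y ^ (2 * b) * t * v := by
    simp only [H2, eb, map_pow, map_mul]
  have eH3 : H3 = (C y * C z) ^ n * w ^ 2 - C x ^ (2 * b) * u * v := by
    simp only [H3, eb, map_pow, map_mul]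
  have mf1 : C x ^ (2 * b + n) * u - C y ^ (2 * b + n) * t ∈ L := by
    have : f1 ∈ L := Ideal.subset_span (by simp)
    simpa only [f1, map_pow] using this
  have mf2 : C x ^ (2 * b + n) * v - C z ^ (2 * b + n) * t ∈ L := by
    have : f2 ∈ L := Ideal.subset_span (by simp)
    simpa only [f2, map_pow] using this
  have mf3 : C y ^ (2 * b + n) * v - C z ^ (2 * b + n) * u ∈ L := by
    have : f3 ∈ L := Ideal.subset_span (by simp)
    simpa only [f3, map_pow] using this
  have mg1 : C x ^ (b + n) * w - (C y * C z) ^ b * t ∈ L := by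
    have : g1 ∈ L := Ideal.subset_span (by simp)
    simpa only [g1, ea, map_pow, map_mul] using this
  have mg2 : C y ^ (b + n) * w - (C x * C z) ^ b * u ∈ L := by
    have : g2 ∈ L := Ideal.subset_span (by simp)
    simpa only [g2, ea, map_pow, map_mul] using this
  have mg3 : C z ^ (b + n) * w - (C x * C y) ^ b * v ∈ L := by
    have : g3 ∈ L := Ideal.subset_span (by simp)
    simpa only [g3, ea, map_pow, map_mul] using this
  have r1 : C x ^ b * H1 ∈ L ∧ C y ^ b * H1 ∈ L ∧ C z ^ (b + n) * H1 ∈ L := by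
    rw [eH1]
    exact Stmt18.easy L b n (C x) (C y) (C z) t u v w mf3 mg1 mg2 mg3
  have r2 : C x ^ b * H2 ∈ L ∧ C z ^ b * H2 ∈ L ∧ C y ^ (b + n) * H2 ∈ L := by
    rw [eH2]
    refine Stmt18.easy L b n (C x) (C z) (C y) t v u w ?_ ?_ mg3 mg2
    · have h := L.neg_mem mf3
      rwa [neg_sub] at h
    · rw [mul_comm (C z : S) (C y : S)]; exact mg1
  have r3 : C y ^ b * H3 ∈ L ∧ C z ^ b * H3 ∈ L ∧ C x ^ (b + n) * H3 ∈ L := by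
    rw [eH3]
    refine Stmt18.easy L b n (C y) (C z) (C x) u v t w ?_ ?_ ?_ mg1
    · have h := L.neg_mem mf2
      rwa [neg_sub] at h
    · rw [mul_comm (C z : S) (C x : S)]; exact mg2
    · rw [mul_comm (C y : S) (C x : S)]; exact mg3
  have s2 : C y ^ n * H2 = C z ^ n * H1 -
      t * (C y ^ (2 * b + n) * v - C z ^ (2 * b + n) * u) := by
    rw [eH1, eH2]; ring
  have s3 : C x ^ n * H3 = C z ^ n * H1 -
      u * (C x ^ (2 * b + n) * v - C z ^ (2 * b + n) * t) := by
    rw [eH1, eH3]; ring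
  have sub1 : L ≤ Ideal.span {f1, f2, f3, g1, g2, g3, H1} := Stmt18.sub7 _ _ _ _ _ _ _
  have sub2 : L ≤ Ideal.span {f1, f2, f3, g1, g2, g3, H1, H2} := Stmt18.sub8 _ _ _ _ _ _ _ _
  have in1 : H1 ∈ Ideal.span {f1, f2, f3, g1, g2, g3, H1} := Stmt18.mem7 _ _ _ _ _ _ _
  have in2 : H1 ∈ Ideal.span {f1, f2, f3, g1, g2, g3, H1, H2} := Stmt18.mem8 _ _ _ _ _ _ _ _
  have X0 : ∀ i, Stmt18.mm 0 (Stmt18.E i 0 0) (1 : k) = C x ^ i := by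
    intro i
    have := Stmt18.mm_eq (k := k) 0 0 0 0 i 0 0
    simpa [Stmt18.D, x] using this
  have X1 : ∀ i, Stmt18.mm 0 (Stmt18.E 0 i 0) (1 : k) = C y ^ i := by
    intro i
    have := Stmt18.mm_eq (k := k) 0 0 0 0 0 i 0
    simpa [Stmt18.D, y] using this
  have X2 : ∀ i, Stmt18.mm 0 (Stmt18.E 0 0 i) (1 : k) = C z ^ i := by
    intro i
    have := Stmt18.mm_eq (k := k) 0 0 0 0 0 0 i
    simpa [Stmt18.D, z] using this
  simp only [map_pow]
  refine ⟨?_, ?_, ?_⟩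
  · refine Stmt18.colon_eq L H1 _ _ _ r1.1 r1.2.1 r1.2.2 fun f hf => ?_
    have := Stmt18.main b (b + n) L n n 0 0 0 0 b b (b + n) (Stmt18.D 1 1 0 0)
      (Stmt18.E 0 0 (2 * b)) (by simp) H1
      (by simp only [Stmt18.mm_eq, eH1, x, y, z, t, u, v, w, map_mul, map_pow]; ring)
      (by omega) (by omega) (by omega)
      (by rw [X0]; exact r1.1) (by rw [X1]; exact r1.2.1) (by rw [X2]; exact r1.2.2)
      (fun F hF => by rw [hL]; exact L.mul_mem_left _ hF) f hf
    rwa [X0, X1, X2] at this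
  · have q : C y ^ n * H2 ∈ Ideal.span {f1, f2, f3, g1, g2, g3, H1} := by
      rw [s2]
      exact Ideal.sub_mem _ (Ideal.mul_mem_left _ _ in1) (Ideal.mul_mem_left _ _ (sub1 mf3))
    refine Stmt18.colon_eq _ H2 _ _ _ (sub1 r2.1) q (sub1 r2.2.1) fun f hf => ?_
    have := Stmt18.main b (b + n) _ n 0 n 0 b 0 b n b (Stmt18.D 1 0 1 0)
      (Stmt18.E 0 (2 * b) 0) (by simp) H2
      (by simp only [Stmt18.mm_eq, eH2, x, y, z, t, u, v, w, map_mul, map_pow]; ring)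
      (by omega) (by omega) (by omega)
      (by rw [X0]; exact sub1 r2.1) (by rw [X1]; exact q) (by rw [X2]; exact sub1 r2.2.1)
      (by
        rw [hL, X1]
        exact Stmt18.mul7 _ _ _ _ _ _ _ _ r1.2.1) f hf
    rwa [X0, X1, X2] at this
  · have q : C x ^ n * H3 ∈ Ideal.span {f1, f2, f3, g1, g2, g3, H1, H2} := by
      rw [s3]
      exact Ideal.sub_mem _ (Ideal.mul_mem_left _ _ in2) (Ideal.mul_mem_left _ _ (sub2 mf2))
    refine Stmt18.colon_eq _ H3 _ _ _ q (sub2 r3.1) (sub2 r3.2.1) fun f hf => ?_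
    have := Stmt18.main b (b + n) _ 0 n n b 0 0 n b b (Stmt18.D 0 1 1 0)
      (Stmt18.E (2 * b) 0 0) (by simp) H3
      (by simp only [Stmt18.mm_eq, eH3, x, y, z, t, u, v, w, map_mul, map_pow]; ring)
      (by omega) (by omega) (by omega)
      (by rw [X0]; exact q) (by rw [X1]; exact sub2 r3.1) (by rw [X2]; exact sub2 r3.2.1)
      (by
        rw [hL, X0]
        exact Stmt18.mul8 _ _ _ _ _ _ _ _ _ r1.1 r2.1) f hf
    rwa [X0, X1, X2] at this
end

section
/- Let L denote the ideal of S = k[x,y,z,t,u,v,w] generated by f1, f2, f3, g1, g2, g3 (with a > 2b > 0). If 2b < a < 3b, then (L, H1, H2, H3) : E = (x^{a-b}, y^{a-b}, z^{a-b}, (xy)^{a-2b}, (xz)^{a-2b}, (yz)^{a-2b})S, where E = w^3 − (xyz)^{3b-a} t u v. If a ≥ 3b, then (L, H1, H2, H3) : E' = ((x^b, y^b, z^b)^2)S, where E' = (xyz)^{a-3b} w^3 − t u v. -/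
set_option synthInstance.maxHeartbeats 1000000

open MvPolynomial

/-- A binomial with one unit coefficient is a nonzerodivisor modulo an extended ideal. -/
theorem binom_regular {A σ : Type*} [CommRing A] (I : Ideal A) (e0 e1 : σ →₀ ℕ) (i : σ)
    (hi : e1 i < e0 i) (c : A) (F : MvPolynomial σ A)
    (h : F * (monomial e0 1 - monomial e1 c) ∈ I.map (C : A →+* MvPolynomial σ A)) :
    F ∈ I.map (C : A →+* MvPolynomial σ A) := by
  classical
  rw [mem_map_C_iff] at h ⊢
  by_contra hcon
  push Not at hcon
  obtain ⟨ν0, hν0⟩ := hcon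
  have hmem : ∀ ν, coeff ν F ∉ I → ν ∈ F.support := by
    intro ν hν
    rw [mem_support_iff]
    intro h0
    exact hν (h0 ▸ I.zero_mem)
  obtain ⟨ν, hν, hmax⟩ := Finset.exists_max_image (F.support.filter (fun ν => coeff ν F ∉ I))
    (fun ν => ν i) ⟨ν0, by simp only [Finset.mem_filter]; exact ⟨hmem _ hν0, hν0⟩⟩
  simp only [Finset.mem_filter] at hν hmax
  have key := h (ν + e0)
  rw [mul_sub, coeff_sub, coeff_mul_monomial, coeff_mul_monomial', mul_one] at key
  apply hν.2
  by_cases hle : e1 ≤ ν + e0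
  · rw [if_pos hle] at key
    have h2 : coeff (ν + e0 - e1) F ∈ I := by
      by_contra hn
      have := hmax _ ⟨hmem _ hn, hn⟩
      simp only [Finsupp.coe_tsub, Finsupp.coe_add, Pi.sub_apply, Pi.add_apply] at this
      omega
    have h3 := I.add_mem key (I.mul_mem_right c h2)
    simpa using h3
  · rw [if_neg hle] at key
    simpa using key

theorem span_mem_of {A : Type*} [CommRing A] {I : Ideal A} {p q r s : A} (hp : p ∈ I) (hq : q ∈ I) :
    p * r - q * s ∈ I :=
  I.sub_mem (I.mul_mem_right _ hp) (I.mul_mem_right _ hq)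

theorem dvd_mem_C {A σ : Type*} [CommRing A] {I : Ideal A} {p q : A} (hp : p ∈ I) (h : p ∣ q) :
    (C q : MvPolynomial σ A) ∈ I.map (C : A →+* MvPolynomial σ A) :=
  Ideal.mem_map_of_mem _ (I.mem_of_dvd h hp)

/-- In `S = k[x,y,z,t,u,v,w]` with `a > 2b > 0`, let `L` be the
ideal generated by `f1, f2, f3, g1, g2, g3`.  If `2b < a < 3b`, then
`(L, H1, H2, H3) : E = (x^{a-b}, y^{a-b}, z^{a-b}, (xy)^{a-2b}, (xz)^{a-2b}, (yz)^{a-2b})`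
with `E = w^3 - (xyz)^{3b-a} t u v`; if `a ≥ 3b`, then
`(L, H1, H2, H3) : E' = (x^b, y^b, z^b)^2` with `E' = (xyz)^{a-3b} w^3 - t u v`. -/
theorem stmt19 {k : Type*} [Field k] (a b : ℕ) (hb : 0 < b) (h2b : 2 * b < a) :
    let R := MvPolynomial (Fin 3) k
    let x : R := X 0
    let y : R := X 1
    let z : R := X 2
    let S := MvPolynomial (Fin 4) R
    let t : S := X 0
    let u : S := X 1
    let v : S := X 2
    let w : S := X 3
    let f1 : S := C (x ^ a) * u - C (y ^ a) * t
    let f2 : S := C (x ^ a) * v - C (z ^ a) * t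
    let f3 : S := C (y ^ a) * v - C (z ^ a) * u
    let g1 : S := C (x ^ (a - b)) * w - C ((y * z) ^ b) * t
    let g2 : S := C (y ^ (a - b)) * w - C ((x * z) ^ b) * u
    let g3 : S := C (z ^ (a - b)) * w - C ((x * y) ^ b) * v
    let H1 : S := C ((x * y) ^ (a - 2 * b)) * w ^ 2 - C (z ^ (2 * b)) * t * u
    let H2 : S := C ((x * z) ^ (a - 2 * b)) * w ^ 2 - C (y ^ (2 * b)) * t * v
    let H3 : S := C ((y * z) ^ (a - 2 * b)) * w ^ 2 - C (x ^ (2 * b)) * u * v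
    let LH : Ideal S := Ideal.span {f1, f2, f3, g1, g2, g3, H1, H2, H3}
    let E : S := w ^ 3 - C ((x * y * z) ^ (3 * b - a)) * t * u * v
    let E' : S := C ((x * y * z) ^ (a - 3 * b)) * w ^ 3 - t * u * v
    (a < 3 * b →
      LH.colon (Ideal.span {E}) =
        Ideal.span {C (x ^ (a - b)), C (y ^ (a - b)), C (z ^ (a - b)),
          C ((x * y) ^ (a - 2 * b)), C ((x * z) ^ (a - 2 * b)),
          C ((y * z) ^ (a - 2 * b))}) ∧
    (3 * b ≤ a →
      LH.colon (Ideal.span {E'}) =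
        (Ideal.span {C (x ^ b), C (y ^ b), C (z ^ b)}) ^ 2) := by
  intro R x y z S t u v w f1 f2 f3 g1 g2 g3 H1 H2 H3 LH E E'
  have mf1 : f1 ∈ LH := Ideal.subset_span (by simp)
  have mg1 : g1 ∈ LH := Ideal.subset_span (by simp)
  have mg2 : g2 ∈ LH := Ideal.subset_span (by simp)
  have mg3 : g3 ∈ LH := Ideal.subset_span (by simp)
  have mH1 : H1 ∈ LH := Ideal.subset_span (by simp)
  have mH2 : H2 ∈ LH := Ideal.subset_span (by simp)
  have mH3 : H3 ∈ LH := Ideal.subset_span (by simp)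
  have two : ∀ (P p q c d : S), p ∈ LH → q ∈ LH → P = c * p + d * q → P ∈ LH := by
    intro P p q c d hp hq h
    rw [h]
    exact LH.add_mem (LH.mul_mem_left _ hp) (LH.mul_mem_left _ hq)
  have colon_iff : ∀ F G : S, F ∈ LH.colon (Ideal.span {G} : Ideal S) ↔ F * G ∈ LH := by
    intro F G
    rw [Submodule.mem_colon]
    constructor
    · intro h
      exact h G (Ideal.subset_span rfl)
    · intro h p hp
      obtain ⟨q, rfl⟩ := Ideal.mem_span_singleton'.1 hp
      have := LH.mul_mem_left q h
      rw [smul_eq_mul]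
      convert this using 1
      ring
  have inLH : ∀ J : Ideal R, x ^ (a - b) ∈ J → y ^ (a - b) ∈ J → z ^ (a - b) ∈ J →
      (x * y) ^ b ∈ J → (x * z) ^ b ∈ J → (y * z) ^ b ∈ J →
      (x * y) ^ (a - 2 * b) ∈ J → (x * z) ^ (a - 2 * b) ∈ J → (y * z) ^ (a - 2 * b) ∈ J →
      x ^ (2 * b) ∈ J → y ^ (2 * b) ∈ J → z ^ (2 * b) ∈ J →
      LH ≤ J.map (C : R →+* S) := by
    intro J hx hy hz hxy hxz hyz kxy kxz kyz qx qy qz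
    have hab : a - b ≤ a := Nat.sub_le _ _
    rw [Ideal.span_le]
    intro p hp
    simp only [Set.mem_insert_iff, Set.mem_singleton_iff] at hp
    have m : ∀ r ∈ J, (C r : S) ∈ J.map (C : R →+* S) := fun r hr => Ideal.mem_map_of_mem _ hr
    have ax := dvd_mem_C (σ := Fin 4) hx (pow_dvd_pow x hab)
    have ay := dvd_mem_C (σ := Fin 4) hy (pow_dvd_pow y hab)
    have az := dvd_mem_C (σ := Fin 4) hz (pow_dvd_pow z hab)
    rcases hp with rfl | rfl | rfl | rfl | rfl | rfl | rfl | rfl | rfl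
    · exact span_mem_of ax ay
    · exact span_mem_of ax az
    · exact span_mem_of ay az
    · exact span_mem_of (m _ hx) (m _ hyz)
    · exact span_mem_of (m _ hy) (m _ hxz)
    · exact span_mem_of (m _ hz) (m _ hxy)
    · exact span_mem_of (m _ kxy) (Ideal.mul_mem_right _ _ (m _ qz))
    · exact span_mem_of (m _ kxz) (Ideal.mul_mem_right _ _ (m _ qy))
    · exact span_mem_of (m _ kyz) (Ideal.mul_mem_right _ _ (m _ qx))
  have ew : (monomial (Finsupp.single 3 3) 1 : S) = w ^ 3 := by
    rw [MvPolynomial.X_pow_eq_monomial]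
  have etuv : ∀ r : R, (monomial (Finsupp.single 0 1 + Finsupp.single 1 1 + Finsupp.single 2 1) r : S)
      = C r * t * u * v := by
    intro r
    change _ = C r * X 0 * X 1 * X 2
    rw [X, X, X, C_mul_monomial, monomial_mul, monomial_mul]
    simp
  have ew' : ∀ r : R, (monomial (Finsupp.single 3 3) r : S) = C r * w ^ 3 := by
    intro r
    rw [← ew, C_mul_monomial, mul_one]
  refine ⟨fun h3 => ?_, fun h3 => ?_⟩
  · obtain ⟨c, d, hc, rfl, rfl⟩ : ∃ c d, 0 < c ∧ b = c + d ∧ a = 3 * c + 2 * d :=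
      ⟨a - 2 * b, 3 * b - a, by omega, by omega, by omega⟩
    have s1 : 3 * c + 2 * d - (c + d) = 2 * c + d := by omega
    have s2 : 3 * c + 2 * d - 2 * (c + d) = c := by omega
    have s3 : 3 * (c + d) - (3 * c + 2 * d) = d := by omega
    simp only [g1, g2, g3, H1, H2, H3, s1, s2] at mg1 mg2 mg3 mH1 mH2 mH3
    simp only [s1, s2] at inLH ⊢
    simp only [E, s3]
    apply le_antisymm
    · intro F hF
      rw [colon_iff] at hF
      set J : Ideal R := Ideal.span {x ^ (2 * c + d), y ^ (2 * c + d), z ^ (2 * c + d),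
        (x * y) ^ c, (x * z) ^ c, (y * z) ^ c} with hJ
      have hx : x ^ (2 * c + d) ∈ J := Ideal.subset_span (by simp)
      have hy : y ^ (2 * c + d) ∈ J := Ideal.subset_span (by simp)
      have hz : z ^ (2 * c + d) ∈ J := Ideal.subset_span (by simp)
      have hxy : (x * y) ^ c ∈ J := Ideal.subset_span (by simp)
      have hxz : (x * z) ^ c ∈ J := Ideal.subset_span (by simp)
      have hyz : (y * z) ^ c ∈ J := Ideal.subset_span (by simp)
      have l1 : c ≤ c + d := by omega
      have l2 : 2 * c + d ≤ 2 * (c + d) := by omega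
      have hle := inLH J hx hy hz (J.mem_of_dvd (pow_dvd_pow _ l1) hxy)
        (J.mem_of_dvd (pow_dvd_pow _ l1) hxz) (J.mem_of_dvd (pow_dvd_pow _ l1) hyz) hxy hxz hyz
        (J.mem_of_dvd (pow_dvd_pow _ l2) hx) (J.mem_of_dvd (pow_dvd_pow _ l2) hy)
        (J.mem_of_dvd (pow_dvd_pow _ l2) hz)
      have hF' := hle hF
      rw [← ew, ← etuv] at hF'
      have := binom_regular J _ _ (3 : Fin 4) (by simp) _ F hF'
      rw [hJ, Ideal.map_span] at this
      simpa only [Set.image_insert_eq, Set.image_singleton] using this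
    · rw [Ideal.span_le]
      intro p hp
      simp only [Set.mem_insert_iff, Set.mem_singleton_iff] at hp
      rw [SetLike.mem_coe, colon_iff]
      rcases hp with rfl | rfl | rfl | rfl | rfl | rfl
      · refine two _ _ _ (w ^ 2) (C ((y * z) ^ d) * t) mg1 mH3 ?_
        simp only [map_mul, map_pow]; ring
      · refine two _ _ _ (w ^ 2) (C ((x * z) ^ d) * u) mg2 mH2 ?_
        simp only [map_mul, map_pow]; ring
      · refine two _ _ _ (w ^ 2) (C ((x * y) ^ d) * v) mg3 mH1 ?_
        simp only [map_mul, map_pow]; ring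
      · refine two _ _ _ w (C (z ^ d) * t * u) mH1 mg3 ?_
        simp only [map_mul, map_pow]; ring
      · refine two _ _ _ w (C (y ^ d) * t * v) mH2 mg2 ?_
        simp only [map_mul, map_pow]; ring
      · refine two _ _ _ w (C (x ^ d) * u * v) mH3 mg1 ?_
        simp only [map_mul, map_pow]; ring
  · obtain ⟨e, rfl⟩ : ∃ e, a = 3 * b + e := ⟨a - 3 * b, by omega⟩
    have s1 : 3 * b + e - b = 2 * b + e := by omega
    have s2 : 3 * b + e - 2 * b = b + e := by omega
    have s3 : 3 * b + e - 3 * b = e := by omega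
    simp only [g1, g2, g3, H1, H2, H3, s1, s2] at mg1 mg2 mg3 mH1 mH2 mH3
    simp only [s1, s2] at inLH
    simp only [E', s3]
    apply le_antisymm
    · intro F hF
      rw [colon_iff] at hF
      set J : Ideal R := (Ideal.span {x ^ b, y ^ b, z ^ b}) ^ 2 with hJ
      have hx : x ^ b ∈ (Ideal.span {x ^ b, y ^ b, z ^ b} : Ideal R) :=
        Ideal.subset_span (by simp)
      have hy : y ^ b ∈ (Ideal.span {x ^ b, y ^ b, z ^ b} : Ideal R) :=
        Ideal.subset_span (by simp)
      have hz : z ^ b ∈ (Ideal.span {x ^ b, y ^ b, z ^ b} : Ideal R) :=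
        Ideal.subset_span (by simp)
      have pr : ∀ p q : R, p ^ b ∈ (Ideal.span {x ^ b, y ^ b, z ^ b} : Ideal R) →
          q ^ b ∈ (Ideal.span {x ^ b, y ^ b, z ^ b} : Ideal R) → (p * q) ^ b ∈ J := by
        intro p q hp hq
        rw [hJ, mul_pow, pow_two]
        exact Ideal.mul_mem_mul hp hq
      have sq : ∀ p : R, p ^ b ∈ (Ideal.span {x ^ b, y ^ b, z ^ b} : Ideal R) →
          p ^ (2 * b) ∈ J := by
        intro p hp
        have := pr p p hp hp
        rwa [← pow_two, ← pow_mul] at this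
      have l1 : b ≤ b + e := by omega
      have l2 : 2 * b ≤ 2 * b + e := by omega
      have hle := inLH J (J.mem_of_dvd (pow_dvd_pow _ l2) (sq x hx))
        (J.mem_of_dvd (pow_dvd_pow _ l2) (sq y hy)) (J.mem_of_dvd (pow_dvd_pow _ l2) (sq z hz))
        (pr x y hx hy) (pr x z hx hz) (pr y z hy hz)
        (J.mem_of_dvd (pow_dvd_pow _ l1) (pr x y hx hy))
        (J.mem_of_dvd (pow_dvd_pow _ l1) (pr x z hx hz))
        (J.mem_of_dvd (pow_dvd_pow _ l1) (pr y z hy hz)) (sq x hx) (sq y hy) (sq z hz)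
      have hF' := Ideal.mul_mem_left _ (-1 : S) (hle hF)
      have e0 : (-1 : S) * (F * (C ((x * y * z) ^ e) * w ^ 3 - t * u * v)) =
          F * (t * u * v - C ((x * y * z) ^ e) * w ^ 3) := by ring
      rw [e0] at hF'
      have e1 : t * u * v = (monomial (Finsupp.single 0 1 + Finsupp.single 1 1 +
          Finsupp.single 2 1) 1 : S) := by
        rw [etuv, C_1, one_mul]
      rw [e1, ← ew'] at hF'
      have := binom_regular J _ _ (0 : Fin 4) (by simp) _ F hF'
      rw [hJ, Ideal.map_pow, Ideal.map_span] at this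
      simpa only [Set.image_insert_eq, Set.image_singleton] using this
    · rw [pow_two, Ideal.span_mul_span', Ideal.span_le]
      intro p hp
      obtain ⟨p1, hp1, p2, hp2, rfl⟩ := Set.mem_mul.1 hp
      simp only [Set.mem_insert_iff, Set.mem_singleton_iff] at hp1 hp2
      rw [SetLike.mem_coe, colon_iff]
      have hxy : C (x ^ b) * C (y ^ b) * (C ((x * y * z) ^ e) * w ^ 3 - t * u * v) ∈ LH := by
        refine two _ _ _ (C (z ^ e) * w) (t * u) mH1 mg3 ?_
        simp only [map_mul, map_pow]; ring
      have hxz : C (x ^ b) * C (z ^ b) * (C ((x * y * z) ^ e) * w ^ 3 - t * u * v) ∈ LH := by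
        refine two _ _ _ (C (y ^ e) * w) (t * v) mH2 mg2 ?_
        simp only [map_mul, map_pow]; ring
      have hyz : C (y ^ b) * C (z ^ b) * (C ((x * y * z) ^ e) * w ^ 3 - t * u * v) ∈ LH := by
        refine two _ _ _ (C (x ^ e) * w) (u * v) mH3 mg1 ?_
        simp only [map_mul, map_pow]; ring
      rcases hp1 with rfl | rfl | rfl <;> rcases hp2 with rfl | rfl | rfl
      · refine two _ _ _ (C ((y * z) ^ e) * w ^ 2) t mg1 mH3 ?_
        simp only [map_mul, map_pow]; ring
      · exact hxy
      · exact hxz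
      · rw [mul_comm (C (y ^ b))]; exact hxy
      · refine two _ _ _ (C ((x * z) ^ e) * w ^ 2) u mg2 mH2 ?_
        simp only [map_mul, map_pow]; ring
      · exact hyz
      · rw [mul_comm (C (z ^ b))]; exact hxz
      · rw [mul_comm (C (z ^ b))]; exact hyz
      · refine two _ _ _ (C ((x * y) ^ e) * w ^ 2) v mg3 mH1 ?_
        simp only [map_mul, map_pow]; ring
end
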